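/- arXiv:2110.10458 — 2 statements merged into one kernel-verified Lean document; each statement's English description precedes it below -/
import Mathlib

section
/- Let T be a hermitian asymmetric triple isomorphism of 𝕆. Define T̃ : C₆ → C₆ by sending the matrix [[α, a, b], [a⋄, β, c], [b⋄, c⋄, γ]] (α, β, γ ∈ ℂ, a, b, c ∈ 𝕆) to [[α, T(a), T(b)⬝T(1)⋄], [T(a)⋄, β, T(c⋄)⋄], [T(1)⬝T(b)⋄, T(c⋄), γ]]. Then T̃ is a Jordan *-automorphism of C₆. -/
/-!
Put `u = T(1)`. Compatibility of `T` with `x ↦ x̄` turns the defining identity into the bilinear one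
`T((x⬝y⋄)⬝z) = (T(x)⬝T(y)⋄)⬝T(z)`, and `x = y = z = 1` gives `N(u) = 1` for the norm form
`x⬝x⋄ = N(x)1`, provided `u ≠ 0`.

A hermitian matrix has three diagonal scalars and three octonions `x₀, x₁, x₂` in the positions
`(1,2), (2,0), (0,1)`, on which the Jordan product depends only through the polar form of `N` and
the cyclic products `(xᵢ₊₁⬝yᵢ₊₂)⋄`. On these octonions `T̃` acts by `T₀(x) = T(x⋄)⋄`,
`T₁(x) = u⬝T(x⋄)⋄` and `T₂ = T`. Setting one variable of the bilinear identity equal to `1` yields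
the triality relations `Tᵢ((x⬝y)⋄) = (Tᵢ₊₁(x)⬝Tᵢ₊₂(y))⋄`.

Triality alone forces every `Tᵢ` to preserve `N`: since `(x⬝y)⬝y⋄ = N(y)x`, applying the relations
twice gives `N(y)Tᵢ(x) = N(Tᵢ₊₁(y))Tᵢ(x)`. Hence `T̃` is multiplicative, and it is bijective because
`N` is nondegenerate.
-/

noncomputable section

open Matrix

/-- The biquaternions `ℍ_ℂ`. -/
abbrev HC : Type := Quaternion ℂ

/-- The `ℂ`-linear quaternion conjugation `x ↦ x⋄` on `ℍ_ℂ`. -/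
def qdia (x : HC) : HC := ⟨x.re, -x.imI, -x.imJ, -x.imK⟩

/-- Coefficientwise complex conjugation `x ↦ x̄` on `ℍ_ℂ`. -/
def qbar (x : HC) : HC :=
  ⟨starRingEnd ℂ x.re, starRingEnd ℂ x.imI, starRingEnd ℂ x.imJ, starRingEnd ℂ x.imK⟩

/-- The complex octonions `𝕆`, modelled as pairs of biquaternions. -/
abbrev Oct : Type := HC × HC

/-- Cayley–Dickson multiplication on `𝕆`. -/
def omul (x y : Oct) : Oct :=
  (x.1 * y.1 - y.2 * qdia x.2, qdia x.1 * y.2 + y.1 * x.2)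

/-- The octonion unit `1 = (1, 0)`. -/
def oone : Oct := (1, 0)

/-- The linear involution `x ↦ x⋄` on `𝕆`. -/
def odia (x : Oct) : Oct := (qdia x.1, -x.2)

/-- The conjugation `x ↦ x̄` on `𝕆`. -/
def obar (x : Oct) : Oct := (qbar x.1, qbar x.2)

/-- The conjugate-linear involution `x* = (x⋄)‾` on `𝕆`. -/
def ostar (x : Oct) : Oct := obar (odia x)

/-- `3×3` matrices of complex octonions. -/
abbrev M3O : Type := Matrix (Fin 3) (Fin 3) Oct

/-- Matrix product formed using the octonion multiplication `⬝` on entries. -/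
def mmulO (X Y : M3O) : M3O := Matrix.of fun i j => ∑ k : Fin 3, omul (X i k) (Y k j)

/-- The Jordan product `X∘Y = ½(X⬝Y + Y⬝X)` on `M₃(𝕆)`. -/
def jord (X Y : M3O) : M3O := (2⁻¹ : ℂ) • (mmulO X Y + mmulO Y X)

/-- The transpose with `⋄` applied entrywise, `Xᵈ`. -/
def mdia (X : M3O) : M3O := Matrix.of fun i j => odia (X j i)

/-- The involution `X*`: the conjugation `x ↦ x̄` applied entrywise. -/
def mstar (X : M3O) : M3O := Matrix.of fun i j => obar (X i j)

/-- The Cartan factor of type 6: `C₆ = H₃(𝕆) = {X ∈ M₃(𝕆) : Xᵈ = X}`. -/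
def H3O : Set M3O := {X | mdia X = X}

/-- The triple product `{X,Y,Z} = (X∘Y*)∘Z + (Z∘Y*)∘X − (X∘Z)∘Y*` on `C₆`. -/
def trip (X Y Z : M3O) : M3O :=
  jord (jord X (mstar Y)) Z + jord (jord Z (mstar Y)) X - jord (jord X Z) (mstar Y)

/-- The identity matrix `𝟏` of `M₃(𝕆)`. -/
def oneM : M3O := Matrix.of fun i j => if i = j then oone else 0

/-- A Jordan `*`-automorphism of `C₆`: a (ℂ-)linear bijection of `C₆ = H₃(𝕆)` onto itself
preserving the Jordan product `∘` and the involution `*`. -/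
def IsJordanStarAut (T : M3O → M3O) : Prop :=
  Set.BijOn T H3O H3O ∧
  (∀ X ∈ H3O, ∀ Y ∈ H3O, T (X + Y) = T X + T Y) ∧
  (∀ (c : ℂ), ∀ X ∈ H3O, T (c • X) = c • T X) ∧
  (∀ X ∈ H3O, ∀ Y ∈ H3O, T (jord X Y) = jord (T X) (T Y)) ∧
  (∀ X ∈ H3O, T (mstar X) = mstar (T X))

/-- A hermitian asymmetric triple isomorphism of `𝕆`: a `ℂ`-linear bijection `T` with
`T((x⬝y*)⬝z) = (T(x)⬝T(y)*)⬝T(z)` and `T(x̄) = T(x)‾`. -/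
def IsHATI (T : Oct → Oct) : Prop :=
  IsLinearMap ℂ T ∧ Function.Bijective T ∧
  (∀ x y z : Oct, T (omul (omul x (ostar y)) z) = omul (omul (T x) (ostar (T y))) (T z)) ∧
  (∀ x : Oct, T (obar x) = obar (T x))

/-- The map `T̃ : C₆ → C₆` induced by `T`, sending `[[α, a, b], [a⋄, β, c], [b⋄, c⋄, γ]]` to
`[[α, T(a), T(b)⬝T(1)⋄], [T(a)⋄, β, T(c⋄)⋄], [T(1)⬝T(b)⋄, T(c⋄), γ]]`. -/
def Ttilde (T : Oct → Oct) (X : M3O) : M3O :=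
  !![X 0 0, T (X 0 1), omul (T (X 0 2)) (odia (T oone));
     odia (T (X 0 1)), X 1 1, odia (T (odia (X 1 2)));
     omul (T oone) (odia (T (X 0 2))), T (odia (X 1 2)), X 2 2]

attribute [simps] qdia qbar

@[simp] lemma oone_fst_re : oone.1.re = 1 := rfl
@[simp] lemma oone_fst_imI : oone.1.imI = 0 := rfl
@[simp] lemma oone_fst_imJ : oone.1.imJ = 0 := rfl
@[simp] lemma oone_fst_imK : oone.1.imK = 0 := rfl
@[simp] lemma oone_snd_re : oone.2.re = 0 := rfl
@[simp] lemma oone_snd_imI : oone.2.imI = 0 := rfl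
@[simp] lemma oone_snd_imJ : oone.2.imJ = 0 := rfl
@[simp] lemma oone_snd_imK : oone.2.imK = 0 := rfl

/-- The map `x ↦ x⋄` as a linear map. -/
def odiaLinear : Oct →ₗ[ℂ] Oct where
  toFun := odia
  map_add' x y := by ext <;> simp [odia, add_comm]
  map_smul' c x := by ext <;> simp [odia]

lemma odia_add (x y : Oct) : odia (x + y) = odia x + odia y := map_add odiaLinear x y

lemma odia_smul (c : ℂ) (x : Oct) : odia (c • x) = c • odia x := map_smul odiaLinear c x

lemma odia_odia (x : Oct) : odia (odia x) = x := by
  ext <;> simp [odia]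

lemma odia_oone : odia oone = oone := by
  ext <;> simp [odia]

lemma odia_omul (x y : Oct) : odia (omul x y) = omul (odia y) (odia x) := by
  ext <;> simp [odia, omul] <;> ring

lemma eq_smul_oone_of_odia_eq_self {x : Oct} (h : odia x = x) : x = x.1.re • oone := by
  simp only [Prod.ext_iff, Quaternion.ext_iff, odia] at h
  ext <;> simp_all [neg_eq_self]

lemma add_omul (x y z : Oct) : omul (x + y) z = omul x z + omul y z := by
  ext <;> simp [omul] <;> ring

lemma smul_omul (c : ℂ) (x y : Oct) : omul (c • x) y = c • omul x y := by
  ext <;> simp [omul] <;> ring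

lemma omul_add (x y z : Oct) : omul x (y + z) = omul x y + omul x z := by
  rw [← odia_odia (omul x (y + z)), odia_omul, odia_add, add_omul, odia_add, odia_omul, odia_omul]
  simp only [odia_odia]

lemma omul_smul (c : ℂ) (x y : Oct) : omul x (c • y) = c • omul x y := by
  rw [← odia_odia (omul x (c • y)), odia_omul, odia_smul, smul_omul, odia_smul, odia_omul]
  simp only [odia_odia]

/-- Octonion multiplication as a bilinear map. -/
def omulBilin : Oct →ₗ[ℂ] Oct →ₗ[ℂ] Oct :=
  LinearMap.mk₂ ℂ omul add_omul smul_omul omul_add omul_smul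

lemma zero_omul (x : Oct) : omul 0 x = 0 := LinearMap.map_zero₂ omulBilin x

lemma oone_omul (x : Oct) : omul oone x = x := by
  ext <;> simp [omul]

lemma omul_oone (x : Oct) : omul x oone = x := by
  ext <;> simp [omul]

lemma obar_obar (x : Oct) : obar (obar x) = x := by
  ext <;> simp [obar]

lemma obar_odia (x : Oct) : obar (odia x) = odia (obar x) := by
  ext <;> simp [obar, odia]

lemma obar_omul (x y : Oct) : obar (omul x y) = omul (obar x) (obar y) := by
  ext <;> simp [obar, omul]

lemma obar_oone : obar oone = oone := by
  ext <;> simp [obar]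

lemma obar_smul (c : ℂ) (x : Oct) : obar (c • x) = starRingEnd ℂ c • obar x := by
  ext <;> simp [obar]

/-- The complex quadratic norm form `N` of `𝕆`, characterised by `x⬝x⋄ = N(x)1`. -/
def onorm (x : Oct) : ℂ := Quaternion.normSq x.1 + Quaternion.normSq x.2

lemma onorm_oone : onorm oone = 1 := by
  simp [onorm, oone]

lemma onorm_odia (x : Oct) : onorm (odia x) = onorm x := by
  simp [onorm, odia, Quaternion.normSq_def']

lemma omul_omul_odia_cancel (x y : Oct) : omul (omul x y) (odia y) = onorm y • x := by
  ext <;> simp [omul, odia, onorm, Quaternion.normSq_def'] <;> ring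

lemma omul_odia_self (x : Oct) : omul x (odia x) = onorm x • oone := by
  simpa only [oone_omul] using omul_omul_odia_cancel oone x

lemma omul_odia_add_omul_odia (x y : Oct) :
    omul x (odia y) + omul y (odia x) = QuadraticMap.polar onorm x y • oone := by
  have h := omul_odia_self (x + y)
  rw [odia_add, add_omul, omul_add, omul_add, omul_odia_self, omul_odia_self] at h
  rw [QuadraticMap.polar]
  linear_combination (norm := module) h

lemma odia_omul_add_odia_omul (x y : Oct) :
    omul (odia x) y + omul (odia y) x = QuadraticMap.polar onorm x y • oone := by
  have h := omul_odia_add_omul_odia (odia x) (odia y)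
  simpa only [QuadraticMap.polar, ← odia_add, onorm_odia, odia_odia] using h

lemma polar_onorm (x y : Oct) :
    QuadraticMap.polar onorm x y =
      2 * (x.1.re * y.1.re + x.1.imI * y.1.imI + x.1.imJ * y.1.imJ + x.1.imK * y.1.imK
        + (x.2.re * y.2.re + x.2.imI * y.2.imI + x.2.imJ * y.2.imJ + x.2.imK * y.2.imK)) := by
  simp only [QuadraticMap.polar, onorm, Quaternion.normSq_def', Prod.fst_add, Prod.snd_add,
    Quaternion.re_add, Quaternion.imI_add, Quaternion.imJ_add, Quaternion.imK_add]
  ring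

lemma eq_zero_of_polar_onorm_eq_zero {x : Oct} (h : ∀ y, QuadraticMap.polar onorm x y = 0) :
    x = 0 := by
  simp only [polar_onorm] at h
  have h_re : x.1.re = 0 := by simpa using h (⟨1, 0, 0, 0⟩, ⟨0, 0, 0, 0⟩)
  have h_imI : x.1.imI = 0 := by simpa using h (⟨0, 1, 0, 0⟩, ⟨0, 0, 0, 0⟩)
  have h_imJ : x.1.imJ = 0 := by simpa using h (⟨0, 0, 1, 0⟩, ⟨0, 0, 0, 0⟩)
  have h_imK : x.1.imK = 0 := by simpa using h (⟨0, 0, 0, 1⟩, ⟨0, 0, 0, 0⟩)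
  have h_re' : x.2.re = 0 := by simpa using h (⟨0, 0, 0, 0⟩, ⟨1, 0, 0, 0⟩)
  have h_imI' : x.2.imI = 0 := by simpa using h (⟨0, 0, 0, 0⟩, ⟨0, 1, 0, 0⟩)
  have h_imJ' : x.2.imJ = 0 := by simpa using h (⟨0, 0, 0, 0⟩, ⟨0, 0, 1, 0⟩)
  have h_imK' : x.2.imK = 0 := by simpa using h (⟨0, 0, 0, 0⟩, ⟨0, 0, 0, 1⟩)
  ext
  exacts [h_re, h_imI, h_imJ, h_imK, h_re', h_imI', h_imJ', h_imK']

lemma polar_onorm_map {S : Oct →ₗ[ℂ] Oct} (hS : ∀ x, onorm (S x) = onorm x) (x y : Oct) :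
    QuadraticMap.polar onorm (S x) (S y) = QuadraticMap.polar onorm x y := by
  simp only [QuadraticMap.polar, ← map_add, hS]

lemma bijective_of_onorm_map {S : Oct →ₗ[ℂ] Oct} (hS : ∀ x, onorm (S x) = onorm x) :
    Function.Bijective S := by
  have hinj : Function.Injective S := (injective_iff_map_eq_zero S).2 fun x hx =>
    eq_zero_of_polar_onorm_eq_zero fun y => by
      rw [← polar_onorm_map hS, hx]
      simp [QuadraticMap.polar, onorm]
  exact ⟨hinj, LinearMap.injective_iff_surjective.1 hinj⟩

/-- The coordinates of a hermitian octonion matrix: its diagonal `d`, and octonions `x₀, x₁, x₂`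
whose indices are chosen so that the Jordan product is invariant under cyclic permutations. -/
abbrev HermCoord : Type := (Fin 3 → ℂ) × (Fin 3 → Oct)

/-- The hermitian octonion matrix with diagonal `d` and with `xᵢ` in position `(i + 1, i + 2)`. -/
def hermMatrix : HermCoord →ₗ[ℂ] M3O where
  toFun p :=
    !![p.1 0 • oone, p.2 2, odia (p.2 1);
       odia (p.2 2), p.1 1 • oone, p.2 0;
       p.2 1, odia (p.2 0), p.1 2 • oone]
  map_add' p q := by
    ext1 i j
    fin_cases i <;> fin_cases j <;> simp [odia_add] <;> module
  map_smul' c p := by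
    ext1 i j
    fin_cases i <;> fin_cases j <;> simp [odia_smul, mul_smul]

lemma hermMatrix_apply (d : Fin 3 → ℂ) (x : Fin 3 → Oct) :
    hermMatrix (d, x) =
      !![d 0 • oone, x 2, odia (x 1);
         odia (x 2), d 1 • oone, x 0;
         x 1, odia (x 0), d 2 • oone] := rfl

lemma range_hermMatrix : Set.range hermMatrix = H3O := by
  refine Set.Subset.antisymm ?_ fun X hX => ?_
  · rintro _ ⟨⟨d, x⟩, rfl⟩
    change mdia _ = _
    ext1 i j
    fin_cases i <;> fin_cases j <;>
      simp [mdia, hermMatrix_apply, odia_odia, odia_smul, odia_oone]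
  · have h (i j : Fin 3) : odia (X j i) = X i j := congrFun (congrFun hX i) j
    have hdiag (i : Fin 3) : X i i = (X i i).1.re • oone := eq_smul_oone_of_odia_eq_self (h i i)
    refine ⟨(fun i => (X i i).1.re, ![X 1 2, X 2 0, X 0 1]), ?_⟩
    ext1 i j
    fin_cases i <;> fin_cases j <;> simp [hermMatrix_apply, h, ← hdiag]

lemma hermMatrix_injective : Function.Injective hermMatrix := by
  refine (injective_iff_map_eq_zero hermMatrix).2 fun ⟨d, x⟩ h => ?_
  have h_entry (i j : Fin 3) : hermMatrix (d, x) i j = 0 := congrFun (congrFun h i) j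
  have h_scalar {c : ℂ} (hc : c • oone = 0) : c = 0 := by
    rw [← mul_one c]
    exact congrArg (fun z : Oct => z.1.re) hc
  refine Prod.ext (funext fun i => ?_) (funext fun i => ?_)
  · fin_cases i
    exacts [h_scalar (h_entry 0 0), h_scalar (h_entry 1 1), h_scalar (h_entry 2 2)]
  · fin_cases i
    exacts [h_entry 1 2, h_entry 2 0, h_entry 0 1]

lemma mstar_hermMatrix (d : Fin 3 → ℂ) (x : Fin 3 → Oct) :
    mstar (hermMatrix (d, x)) = hermMatrix (fun i => starRingEnd ℂ (d i), fun i => obar (x i)) := by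
  ext1 i j
  fin_cases i <;> fin_cases j <;>
    simp [mstar, hermMatrix_apply, obar_smul, obar_oone, obar_odia]

/-- The Jordan product of `C₆` in the coordinates of `hermMatrix`. -/
def coordJord (p q : HermCoord) : HermCoord :=
  (2⁻¹ : ℂ) •
    (fun i => 2 * p.1 i * q.1 i + QuadraticMap.polar onorm (p.2 (i + 1)) (q.2 (i + 1))
        + QuadraticMap.polar onorm (p.2 (i + 2)) (q.2 (i + 2)),
      fun i => (p.1 (i + 1) + p.1 (i + 2)) • q.2 i + (q.1 (i + 1) + q.1 (i + 2)) • p.2 i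
        + odia (omul (p.2 (i + 1)) (q.2 (i + 2))) + odia (omul (q.2 (i + 1)) (p.2 (i + 2))))

lemma jord_hermMatrix (p q : HermCoord) :
    jord (hermMatrix p) (hermMatrix q) = hermMatrix (coordJord p q) := by
  obtain ⟨d, x⟩ := p
  obtain ⟨e, y⟩ := q
  rw [coordJord, map_smul, jord]
  congr 1
  ext1 i j
  fin_cases i <;> fin_cases j <;>
    simp [mmulO, hermMatrix_apply, Fin.sum_univ_three, omul_smul, smul_omul, omul_oone, oone_omul,
      odia_add, odia_smul, odia_omul, odia_odia] <;>
    try module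
  · linear_combination (norm := module)
      odia_omul_add_odia_omul (x 1) (y 1) + omul_odia_add_omul_odia (x 2) (y 2)
  · linear_combination (norm := module)
      omul_odia_add_omul_odia (x 0) (y 0) + odia_omul_add_odia_omul (x 2) (y 2)
  · linear_combination (norm := module)
      odia_omul_add_odia_omul (x 0) (y 0) + omul_odia_add_omul_odia (x 1) (y 1)

/-- Three linear maps of `𝕆` in triality, in the cyclically symmetric normalisation. -/
def IsTriality (T : Fin 3 → Oct →ₗ[ℂ] Oct) : Prop :=
  ∀ i x y, T i (odia (omul x y)) = odia (omul (T (i + 1) x) (T (i + 2) y))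

/-- The linear map of hermitian coordinates that fixes the diagonal and applies `T i` to the `i`-th
octonion. -/
def offDiagMap (T : Fin 3 → Oct →ₗ[ℂ] Oct) : HermCoord →ₗ[ℂ] HermCoord :=
  LinearMap.id.prodMap (LinearMap.piMap T)

lemma offDiagMap_apply (T : Fin 3 → Oct →ₗ[ℂ] Oct) (d : Fin 3 → ℂ) (x : Fin 3 → Oct) :
    offDiagMap T (d, x) = (d, fun i => T i (x i)) := rfl

namespace IsTriality

variable {T : Fin 3 → Oct →ₗ[ℂ] Oct}

lemma onorm_map_succ (hT : IsTriality T) {i : Fin 3} (hi : T i ≠ 0) (y : Oct) :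
    onorm (T (i + 1) y) = onorm y := by
  obtain ⟨x, hx⟩ := DFunLike.ne_iff.1 hi
  have h : onorm (T (i + 1) y) • T i x = onorm y • T i x := calc
    onorm (T (i + 1) y) • T i x
      = omul (omul (T i x) (T (i + 1) y)) (odia (T (i + 1) y)) :=
        (omul_omul_odia_cancel _ _).symm
    _ = odia (omul (T (i + 1) y) (T (i + 2) (odia (omul x y)))) := by
        rw [hT (i + 2), odia_omul, odia_odia, show i + 2 + 1 = i by grind,
          show i + 2 + 2 = i + 1 by grind]
    _ = T i (odia (omul y (odia (omul x y)))) := (hT i _ _).symm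
    _ = onorm y • T i x := by
        rw [odia_omul, odia_odia, omul_omul_odia_cancel, map_smul]
  exact smul_left_injective ℂ hx h

lemma succ_ne_zero (hT : IsTriality T) {i : Fin 3} (hi : T i ≠ 0) : T (i + 1) ≠ 0 := by
  intro h
  have h_one := hT.onorm_map_succ hi oone
  rw [h, onorm_oone] at h_one
  simp [onorm] at h_one

lemma onorm_map (hT : IsTriality T) (h0 : T ≠ 0) (i : Fin 3) (x : Oct) :
    onorm (T i x) = onorm x := by
  obtain ⟨j, hj⟩ := Function.ne_iff.1 h0
  have hj₁ := hT.succ_ne_zero hj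
  have hj₂ := hT.succ_ne_zero hj₁
  obtain rfl | rfl | rfl : i = j + 1 ∨ i = j + 1 + 1 ∨ i = j + 1 + 1 + 1 := by grind
  exacts [hT.onorm_map_succ hj x, hT.onorm_map_succ hj₁ x, hT.onorm_map_succ hj₂ x]

lemma offDiagMap_bijective (hT : IsTriality T) (h0 : T ≠ 0) :
    Function.Bijective (offDiagMap T) :=
  Function.bijective_id.prodMap
    (Function.Bijective.piMap fun i => bijective_of_onorm_map (hT.onorm_map h0 i))

lemma offDiagMap_coordJord (hT : IsTriality T) (h0 : T ≠ 0) (p q : HermCoord) :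
    offDiagMap T (coordJord p q) = coordJord (offDiagMap T p) (offDiagMap T q) := by
  have h_polar (i : Fin 3) := polar_onorm_map (hT.onorm_map h0 i)
  have h_triality (i : Fin 3) (x y : Oct) := hT i x y
  rw [coordJord, map_smul, coordJord]
  congr 1
  ext1
  · funext i
    simp [offDiagMap, h_polar]
  · funext i
    simp [offDiagMap, h_triality]

theorem isJordanStarAut (hT : IsTriality T) (h0 : T ≠ 0)
    (hbar : ∀ i x, T i (obar x) = obar (T i x)) {F : M3O → M3O}
    (hF : Function.Semiconj hermMatrix (offDiagMap T) F) : IsJordanStarAut F := by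
  rw [IsJordanStarAut, ← range_hermMatrix]
  refine ⟨hF.bijOn_range (hT.offDiagMap_bijective h0) hermMatrix_injective, ?_, ?_, ?_, ?_⟩
  · rintro _ ⟨p, rfl⟩ _ ⟨q, rfl⟩
    simp only [← map_add, ← hF.eq]
  · rintro c _ ⟨p, rfl⟩
    simp only [← map_smul, ← hF.eq]
  · rintro _ ⟨p, rfl⟩ _ ⟨q, rfl⟩
    rw [jord_hermMatrix, ← hF.eq, ← hF.eq, ← hF.eq, hT.offDiagMap_coordJord h0, jord_hermMatrix]
  · rintro _ ⟨⟨d, x⟩, rfl⟩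
    rw [mstar_hermMatrix, ← hF.eq, ← hF.eq, offDiagMap_apply, offDiagMap_apply, mstar_hermMatrix]
    simp only [hbar]

end IsTriality

/-- The bilinear form of the asymmetric triple identity, with `y⋄` in place of `y*`. -/
def IsTripleHom (T : Oct →ₗ[ℂ] Oct) : Prop :=
  ∀ x y z, T (omul (omul x (odia y)) z) = omul (omul (T x) (odia (T y))) (T z)

/-- The three maps `x ↦ T(x⋄)⋄`, `x ↦ T(1)⬝T(x⋄)⋄` and `T` through which `T̃` acts on the octonion
coordinates of a hermitian matrix. -/
def entryMaps (T : Oct →ₗ[ℂ] Oct) : Fin 3 → Oct →ₗ[ℂ] Oct :=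
  ![odiaLinear ∘ₗ T ∘ₗ odiaLinear, omulBilin (T oone) ∘ₗ odiaLinear ∘ₗ T ∘ₗ odiaLinear, T]

section

variable (T : Oct →ₗ[ℂ] Oct) (x : Oct)

@[simp] lemma entryMaps_zero_apply : entryMaps T 0 x = odia (T (odia x)) := rfl

@[simp] lemma entryMaps_one_apply : entryMaps T 1 x = omul (T oone) (odia (T (odia x))) := rfl

@[simp] lemma entryMaps_two : entryMaps T 2 = T := rfl

lemma semiconj_hermMatrix_Ttilde :
    Function.Semiconj hermMatrix (offDiagMap (entryMaps T)) (Ttilde T) := by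
  rintro ⟨d, x⟩
  ext1 i j
  fin_cases i <;> fin_cases j <;>
    simp [Ttilde, offDiagMap, hermMatrix_apply, odia_omul, odia_odia]

end

lemma entryMaps_obar {T : Oct →ₗ[ℂ] Oct} (hbar : ∀ x, T (obar x) = obar (T x)) (i : Fin 3)
    (x : Oct) : entryMaps T i (obar x) = obar (entryMaps T i x) := by
  have h_one : obar (T oone) = T oone := by rw [← hbar, obar_oone]
  fin_cases i <;> simp [hbar, h_one, obar_omul, ← obar_odia]

namespace IsTripleHom

variable {T : Oct →ₗ[ℂ] Oct}

lemma of_ostar (htriple : ∀ x y z,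
      T (omul (omul x (ostar y)) z) = omul (omul (T x) (ostar (T y))) (T z))
    (hbar : ∀ x, T (obar x) = obar (T x)) : IsTripleHom T := fun x y z => by
  simpa only [ostar, hbar, obar_odia, obar_obar] using htriple x (obar y) z

lemma map_omul (hT : IsTripleHom T) (x z : Oct) :
    T (omul x z) = omul (omul (T x) (odia (T oone))) (T z) := by
  simpa only [odia_oone, omul_oone] using hT x oone z

lemma map_oone_ne_zero (hT : IsTripleHom T) (h0 : T ≠ 0) : T oone ≠ 0 := by
  contrapose! h0
  refine LinearMap.ext fun x => ?_
  calc
    T x = omul (omul (T oone) (odia (T oone))) (T x) := by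
      rw [← hT.map_omul, oone_omul]
    _ = 0 := by
      rw [h0, zero_omul, zero_omul]

lemma onorm_map_oone (hT : IsTripleHom T) (h0 : T ≠ 0) : onorm (T oone) = 1 := by
  have h : onorm (T oone) • T oone = (1 : ℂ) • T oone := by
    have h_triple := hT.map_omul oone oone
    rw [omul_oone, omul_odia_self, smul_omul, oone_omul] at h_triple
    rw [← h_triple, one_smul]
  exact smul_left_injective ℂ (hT.map_oone_ne_zero h0) h

lemma isTriality_entryMaps (hT : IsTripleHom T) (h0 : T ≠ 0) : IsTriality (entryMaps T) := by
  intro i x y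
  fin_cases i
  · have h : T (omul x y) = omul (omul (T oone) (odia (T (odia x)))) (T y) := by
      simpa only [odia_odia, oone_omul] using hT oone (odia x) y
    simp [odia_odia, h]
  · have h : T (omul x y) = omul (omul (T x) (odia (T (odia y)))) (T oone) := by
      simpa only [odia_odia, omul_oone] using hT x (odia y) oone
    have h_cancel (w : Oct) : omul (T oone) (odia (omul w (T oone))) = odia w := by
      have := congrArg odia (omul_omul_odia_cancel w (T oone))
      rwa [odia_omul, odia_odia, hT.onorm_map_oone h0, one_smul] at this
    simp [odia_odia, h, h_cancel]
  · simp [odia_omul, odia_odia, hT.map_omul]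

end IsTripleHom

theorem statement12_general (T : Oct →ₗ[ℂ] Oct) (h0 : T ≠ 0)
    (htriple : ∀ x y z, T (omul (omul x (ostar y)) z) = omul (omul (T x) (ostar (T y))) (T z))
    (hbar : ∀ x, T (obar x) = obar (T x)) : IsJordanStarAut (Ttilde T) := by
  have hT : IsTripleHom T := .of_ostar htriple hbar
  have h0' : entryMaps T ≠ 0 := fun h => h0 (congrFun h 2)
  exact (hT.isTriality_entryMaps h0).isJordanStarAut h0' (entryMaps_obar hbar)
    (semiconj_hermMatrix_Ttilde T)

/-- If `T` is a hermitian asymmetric triple isomorphism of `𝕆`, then the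
induced map `T̃` is a Jordan `*`-automorphism of `C₆`. -/
theorem statement12 (T : Oct → Oct) (hT : IsHATI T) :
    IsJordanStarAut (Ttilde T) := by
  obtain ⟨hlin, hbij, htriple, hbar⟩ := hT
  exact statement12_general (hlin.mk' T) (LinearMap.ne_zero_of_injective hbij.injective)
    htriple hbar
end
end

section
/- If q ∈ H₃(ℍ_ℂ) is a minimal projection, then the complex 6×6 matrix q̂ has rank two. -/
/-!
Since `q̂` is idempotent, its rank is its trace `T`, which is nonzero because `q ≠ 0`. As
`T = 2 re (tr q)` and the diagonal entries of `q` are scalars, some entry `d = q i i` is nonzero.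
Let `E` be the matrix unit at `(i, i)`. Minimality gives `q E q = c q`, whose `(i, i)` entry reads
`d² = c d`, so `c = d`. The trace of complex matrices is cyclic and `A ↦ Â` is multiplicative, so
taking traces of images gives `d T = tr (q̂ Ê q̂) = tr (Ê q̂) = 2 d`, whence `T = 2`.
-/

noncomputable section

open Matrix

/-- The embedding `ℂ ⊆ ℍ_ℂ` as scalar biquaternions. -/
def cq (z : ℂ) : HC := ⟨z, 0, 0, 0⟩

/-- The conjugate-linear involution `x* = (x̄)⋄`. -/
def qstar (x : HC) : HC := qdia (qbar x)

/-- The natural (Euclidean/product) topology on the biquaternions `ℍ_ℂ ≅ ℂ⁴`. -/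
instance : TopologicalSpace HC :=
  TopologicalSpace.induced (fun q : HC => (q.re, q.imI, q.imJ, q.imK)) inferInstance

/-- The 2×2 complex matrix `x̂` associated to a biquaternion `x`. -/
def hat (x : HC) : Matrix (Fin 2) (Fin 2) ℂ :=
  !![x.re + Complex.I * x.imI, x.imJ + Complex.I * x.imK;
     -x.imJ + Complex.I * x.imK, x.re - Complex.I * x.imI]

/-- The `2n × 2n` complex matrix `Â` obtained by replacing every biquaternion entry `a`
of `A` by the 2×2 block `â`. -/
def hatM {n : ℕ} (A : Matrix (Fin n) (Fin n) HC) :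
    Matrix (Fin n × Fin 2) (Fin n × Fin 2) ℂ :=
  Matrix.of fun p q => hat (A p.1 q.1) p.2 q.2

/-- `A` is `⋄`-hermitian: `Aᵈ = A`, i.e. `(A j i)⋄ = A i j` for all `i j`.
`H_n(ℍ_ℂ)` is the collection of all such matrices. -/
def IsHerm {n : ℕ} (A : Matrix (Fin n) (Fin n) HC) : Prop :=
  ∀ i j, qdia (A j i) = A i j

/-- The defining properties of the sequence of determinants `(dt_n)_{n ≥ 1}`:
`D n` plays the role of `dt_{n+1} : H_{n+1}(ℍ_ℂ) → ℍ_ℂ`.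
(i) continuity on `H_{n+1}(ℍ_ℂ)`; (ii) `dt₁((x₁₁)) = x₁₁`;
(iii) the inductive formula for `dt_{n+1}` when `x₁₁ ≠ 0`. -/
def IsDtSeq (D : ∀ n : ℕ, Matrix (Fin (n + 1)) (Fin (n + 1)) HC → HC) : Prop :=
  (∀ n : ℕ, ContinuousOn (D n) {A | IsHerm A}) ∧
  (∀ A : Matrix (Fin 1) (Fin 1) HC, IsHerm A → D 0 A = A 0 0) ∧
  (∀ (n : ℕ) (A : Matrix (Fin (n + 2)) (Fin (n + 2)) HC), IsHerm A → A 0 0 ≠ 0 →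
    D (n + 1) A = A 0 0 *
      D n (Matrix.of fun i j : Fin (n + 1) =>
        A i.succ j.succ - Ring.inverse (A 0 0) * A i.succ 0 * A 0 j.succ))

/-- The conjugate transpose `A*` of a matrix of biquaternions
(transpose with `*` applied entrywise). -/
def mstarB {n : ℕ} (A : Matrix (Fin n) (Fin n) HC) : Matrix (Fin n) (Fin n) HC :=
  Matrix.of fun i j => qstar (A j i)

/-- The transpose `Aᵈ` with `⋄` applied entrywise. -/
def mdiaB {n : ℕ} (A : Matrix (Fin n) (Fin n) HC) : Matrix (Fin n) (Fin n) HC :=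
  Matrix.of fun i j => qdia (A j i)

/-- The Jordan product `A∘B = ½(AB + BA)` on `M₃(ℍ_ℂ)`. -/
def jordB (A B : Matrix (Fin 3) (Fin 3) HC) : Matrix (Fin 3) (Fin 3) HC :=
  (2⁻¹ : ℂ) • (A * B + B * A)

/-- The triple product `{A,B,C} = ½(AB*C + CB*A)` on `H₃(ℍ_ℂ)`. -/
def tripB (A B C : Matrix (Fin 3) (Fin 3) HC) : Matrix (Fin 3) (Fin 3) HC :=
  (2⁻¹ : ℂ) • (A * mstarB B * C + C * mstarB B * A)

/-- A projection in `H₃(ℍ_ℂ)`: `P ∈ H₃(ℍ_ℂ)` with `P* = P` and `P∘P = P`. -/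
def IsProjB (P : Matrix (Fin 3) (Fin 3) HC) : Prop :=
  IsHerm P ∧ mstarB P = P ∧ jordB P P = P

/-- A minimal projection in `H₃(ℍ_ℂ)`: a nonzero projection `P` with `{P,X,P} ∈ ℂ·P`
for every `X ∈ H₃(ℍ_ℂ)`. -/
def IsMinProjB (P : Matrix (Fin 3) (Fin 3) HC) : Prop :=
  IsProjB P ∧ P ≠ 0 ∧
    ∀ X : Matrix (Fin 3) (Fin 3) HC, IsHerm X → ∃ c : ℂ, tripB P X P = c • P

section Idempotent

variable {ι K : Type*} [Fintype ι] [Field K] {A : Matrix ι ι K}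

lemma rank_eq_trace_of_isIdempotentElem (hA : IsIdempotentElem A) : (A.rank : K) = A.trace := by
  classical
  have hlin : IsIdempotentElem (toLin' A) := hA.map toLinAlgEquiv'
  have hproj := LinearMap.IsIdempotentElem.isProj_range _ hlin
  rw [← trace_toLin'_eq, hproj.trace, Matrix.rank, toLin'_apply']

lemma trace_ne_zero_of_isIdempotentElem [CharZero K] (hA : IsIdempotentElem A) (hne : A ≠ 0) :
    A.trace ≠ 0 := by
  classical
  have hlin : IsIdempotentElem (toLin' A) := hA.map toLinAlgEquiv'
  rwa [← trace_toLin'_eq, ne_eq, LinearMap.IsIdempotentElem.trace_eq_zero_iff hlin,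
    LinearEquiv.map_eq_zero_iff]

end Idempotent

section Hat

open scoped Quaternion

/-- The representation `x ↦ x̂` of the biquaternions by `2 × 2` complex matrices, as a homomorphism
of `ℂ`-algebras. -/
def hatAlgHom : HC →ₐ[ℂ] Matrix (Fin 2) (Fin 2) ℂ where
  toFun := hat
  map_one' := by ext a b; fin_cases a <;> fin_cases b <;> simp [hat]
  map_zero' := by ext a b; fin_cases a <;> fin_cases b <;> simp [hat]
  map_add' x y := by
    simp only [hat, Quaternion.re_add, Quaternion.imI_add, Quaternion.imJ_add, Quaternion.imK_add,
      of_add_of, cons_add_cons, empty_add_empty]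
    congrm !![?_, ?_; ?_, ?_] <;> ring
  map_mul' x y := by
    simp only [hat, mul_fin_two, Quaternion.re_mul, Quaternion.imI_mul, Quaternion.imJ_mul,
      Quaternion.imK_mul]
    congrm !![?_, ?_; ?_, ?_]
    · linear_combination -(x.imI * y.imI + x.imK * y.imK) * Complex.I_mul_I
    · linear_combination -(x.imI * y.imK - x.imK * y.imI) * Complex.I_mul_I
    · linear_combination -(x.imK * y.imI - x.imI * y.imK) * Complex.I_mul_I
    · linear_combination -(x.imI * y.imI + x.imK * y.imK) * Complex.I_mul_I
  commutes' r := by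
    ext a b
    fin_cases a <;> fin_cases b <;> simp [hat, Matrix.algebraMap_matrix_apply]

lemma hatAlgHom_injective : Function.Injective hatAlgHom := by
  rw [injective_iff_map_eq_zero]
  intro x hx
  have h00 : x.re + Complex.I * x.imI = 0 := congrFun₂ hx 0 0
  have h01 : x.imJ + Complex.I * x.imK = 0 := congrFun₂ hx 0 1
  have h10 : -x.imJ + Complex.I * x.imK = 0 := congrFun₂ hx 1 0
  have h11 : x.re - Complex.I * x.imI = 0 := congrFun₂ hx 1 1
  ext
  · rw [Quaternion.re_zero]
    linear_combination (h00 + h11) / 2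
  · rw [Quaternion.imI_zero]
    linear_combination -Complex.I / 2 * (h00 - h11) + x.imI * Complex.I_mul_I
  · rw [Quaternion.imJ_zero]
    linear_combination (h01 - h10) / 2
  · rw [Quaternion.imK_zero]
    linear_combination -Complex.I / 2 * (h01 + h10) + x.imK * Complex.I_mul_I

lemma trace_hat (x : HC) : (hat x).trace = 2 * x.re := by
  simp only [hat, trace_fin_two_of]
  ring

/-- The map `A ↦ Â` on matrices of biquaternions, as a homomorphism of `ℂ`-algebras: apply
`x ↦ x̂` entrywise, then flatten the matrix of blocks. -/
def hatMAlgHom (n : ℕ) : Matrix (Fin n) (Fin n) HC →ₐ[ℂ] Matrix (Fin n × Fin 2) (Fin n × Fin 2) ℂ :=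
  (compAlgEquiv (Fin n) (Fin 2) ℂ ℂ).toAlgHom.comp hatAlgHom.mapMatrix

variable {n : ℕ}

lemma hatMAlgHom_apply (A : Matrix (Fin n) (Fin n) HC) : hatMAlgHom n A = hatM A := rfl

lemma hatMAlgHom_injective : Function.Injective (hatMAlgHom n) :=
  (compAlgEquiv (Fin n) (Fin 2) ℂ ℂ).injective.comp (map_injective hatAlgHom_injective)

lemma trace_hatMAlgHom (A : Matrix (Fin n) (Fin n) HC) :
    (hatMAlgHom n A).trace = 2 * A.trace.re :=
  calc
    (hatMAlgHom n A).trace = ∑ i, (hat (A i i)).trace := Fintype.sum_prod_type _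
    _ = (∑ i, hatAlgHom (A i i)).trace := (trace_sum _ _).symm
    _ = (hat A.trace).trace := congrArg Matrix.trace (map_sum hatAlgHom _ _).symm
    _ = 2 * A.trace.re := trace_hat _

end Hat

section Involutions

open scoped Quaternion

variable {n : ℕ}

lemma qdia_eq_star (x : HC) : qdia x = star x := by
  ext <;> simp [qdia]

lemma IsHerm.diag_eq_coe_re {A : Matrix (Fin n) (Fin n) HC} (hA : IsHerm A) (i : Fin n) :
    A i i = ((A i i).re : HC) :=
  Quaternion.star_eq_self.1 ((qdia_eq_star _).symm.trans (hA i i))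

lemma isHerm_single_one (i : Fin n) : IsHerm (single i i (1 : HC)) := by
  intro a b
  simp only [single_apply, apply_ite qdia, qdia_eq_star, star_zero, star_one, and_comm]

lemma mstarB_single_one (i : Fin n) : mstarB (single i i (1 : HC)) = single i i 1 := by
  have hzero : qstar 0 = 0 := by ext <;> simp [qstar, qdia, qbar]
  have hone : qstar 1 = 1 := by ext <;> simp [qstar, qdia, qbar]
  ext1 a b
  simp only [mstarB, of_apply, single_apply, apply_ite qstar, hzero, hone, and_comm]

lemma jordB_self (A : Matrix (Fin 3) (Fin 3) HC) : jordB A A = A * A := by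
  rw [jordB, ← two_smul ℂ, inv_smul_smul₀ two_ne_zero]

lemma tripB_self_self (A B : Matrix (Fin 3) (Fin 3) HC) : tripB A B A = A * mstarB B * A := by
  rw [tripB, ← two_smul ℂ, inv_smul_smul₀ two_ne_zero]

lemma IsProjB.isIdempotentElem {P : Matrix (Fin 3) (Fin 3) HC} (hP : IsProjB P) :
    IsIdempotentElem P :=
  (jordB_self P).symm.trans hP.2.2

lemma IsMinProjB.exists_mul_single_mul {P : Matrix (Fin 3) (Fin 3) HC} (hP : IsMinProjB P)
    (i : Fin 3) : ∃ c : ℂ, P * single i i 1 * P = c • P := by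
  obtain ⟨c, hc⟩ := hP.2.2 _ (isHerm_single_one i)
  exact ⟨c, by rwa [tripB_self_self, mstarB_single_one] at hc⟩

end Involutions

section Minimal

variable {n : ℕ} {q : Matrix (Fin n) (Fin n) HC}

lemma IsHerm.exists_re_diag_ne_zero (hherm : IsHerm q) (hidem : IsIdempotentElem q) (hne : q ≠ 0) :
    ∃ i, (q i i).re ≠ 0 := by
  have htrace : (hatMAlgHom n q).trace ≠ 0 :=
    trace_ne_zero_of_isIdempotentElem (hidem.map _)
      ((map_ne_zero_iff _ hatMAlgHom_injective).2 hne)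
  contrapose! htrace
  have hzero : q.trace = 0 := Finset.sum_eq_zero fun i _ => by
    rw [diag_apply, hherm.diag_eq_coe_re, htrace, Quaternion.coe_zero]
  rw [trace_hatMAlgHom, hzero, Quaternion.re_zero, mul_zero]

lemma IsHerm.eq_re_diag_of_mul_single_mul (hherm : IsHerm q) {i : Fin n} (hi : (q i i).re ≠ 0)
    {c : ℂ} (hc : q * single i i 1 * q = c • q) : c = (q i i).re := by
  have hentry : q i i * q i i = c • q i i := by
    simpa [mul_apply, single_apply, ite_and] using congrFun₂ hc i i
  rw [hherm.diag_eq_coe_re, ← Quaternion.coe_mul, ← Quaternion.coe_smul,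
    Quaternion.coe_inj] at hentry
  exact (mul_right_cancel₀ hi hentry).symm

lemma mul_trace_hatMAlgHom_of_mul_single_mul (hidem : IsIdempotentElem q) {i : Fin n} {c : ℂ}
    (hc : q * single i i 1 * q = c • q) : c * (hatMAlgHom n q).trace = 2 * (q i i).re :=
  calc
    c * (hatMAlgHom n q).trace = (hatMAlgHom n (q * (single i i 1 * q))).trace := by
      rw [← mul_assoc, hc, map_smul, trace_smul, smul_eq_mul]
    _ = (hatMAlgHom n (single i i 1 * (q * q))).trace := by
      rw [map_mul, trace_mul_comm, ← map_mul, mul_assoc]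
    _ = 2 * (q i i).re := by
      rw [hidem.eq, trace_hatMAlgHom, trace_single_mul, one_smul]

theorem statement14_general (hherm : IsHerm q) (hidem : IsIdempotentElem q) (hne : q ≠ 0)
    (hmin : ∀ i, ∃ c : ℂ, q * single i i 1 * q = c • q) : (hatM q).rank = 2 := by
  obtain ⟨i, hi⟩ := hherm.exists_re_diag_ne_zero hidem hne
  obtain ⟨c, hc⟩ := hmin i
  have htrace : (hatMAlgHom n q).trace = 2 := by
    have hmul := mul_trace_hatMAlgHom_of_mul_single_mul hidem hc
    rw [hherm.eq_re_diag_of_mul_single_mul hi hc, mul_comm 2] at hmul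
    exact mul_left_cancel₀ hi hmul
  have hrank := rank_eq_trace_of_isIdempotentElem (hidem.map (hatMAlgHom n))
  rw [htrace, hatMAlgHom_apply] at hrank
  exact_mod_cast hrank

end Minimal

/-- If `q ∈ H₃(ℍ_ℂ)` is a minimal projection, then the complex `6×6`
matrix `q̂` has rank two. -/
theorem statement14 (q : Matrix (Fin 3) (Fin 3) HC) (hq : IsMinProjB q) :
    (hatM q).rank = 2 :=
  statement14_general hq.1.1 hq.1.isIdempotentElem hq.2.1 hq.exists_mul_single_mul
end
end
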